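/- arXiv:1008.3135 — 2 statements merged into one kernel-verified Lean document; each statement's English description precedes it below -/
import Mathlib

section
/- Let m ≥ 4 be an integer and let A = ℂ[X, Y]/(2XY, X² + (m−1)Y^{m−2}) be the quotient of the polynomial ring in two variables by the ideal generated by the two partial derivatives of f(x, y) = x²y + y^{m−1}. Then the ℂ-vector space Der_ℂ(A, A) of ℂ-linear derivations of A has dimension m. -/
open MvPolynomial

/-- The moduli algebra of the simple singularity `D_m`, `f(x,y) = x²y + y^{m-1}`:
the quotient of `ℂ[X,Y]` by the ideal generated by `∂f/∂x = 2xy` and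
`∂f/∂y = x² + (m-1)y^{m-2}`. -/
noncomputable abbrev moduliD (m : ℕ) : Type :=
  MvPolynomial (Fin 2) ℂ ⧸
    Ideal.span {(2 : MvPolynomial (Fin 2) ℂ) * MvPolynomial.X 0 * MvPolynomial.X 1,
      (MvPolynomial.X 0 : MvPolynomial (Fin 2) ℂ) ^ 2
        + MvPolynomial.C ((m : ℂ) - 1) * MvPolynomial.X 1 ^ (m - 2)}

/-- Abstract computation: a `ℂ`-algebra with generators `x, y`, relations `xy = 0`,
`x² = -c y^(k+2)`, and coordinates `φ i` (of `y^i`), `ψ` (of `x`). -/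
theorem Dm_core (k : ℕ) (A : Type) [CommRing A] [Algebra ℂ A] (x y : A) (c : ℂ) (hc : c ≠ 0)
    (hxy : x * y = 0) (hxx : x ^ 2 = -(c • y ^ (k + 2)))
    (φ : ℕ → A →ₗ[ℂ] ℂ) (ψ : A →ₗ[ℂ] ℂ)
    (hφy : ∀ i j, i ≤ k + 2 → φ i (y ^ j) = if j = i then 1 else 0)
    (hφx : ∀ i, i ≤ k + 2 → φ i x = 0)
    (hψy : ∀ j, ψ (y ^ j) = 0) (hψx : ψ x = 1)
    (hspan : ∀ z : A, ∃ g : ℕ → ℂ, ∃ a : ℂ,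
      z = ∑ i ∈ Finset.range (k + 3), g i • y ^ i + a • x)
    (hlift : ∀ a b : A, y * a + x * b = 0 →
      2 * x * a + (c * (k + 2)) • (y ^ (k + 1) * b) = 0 →
      ∃ D : Derivation ℂ A A, D x = a ∧ D y = b)
    (hext : ∀ D : Derivation ℂ A A, D x = 0 → D y = 0 → D = 0) :
    Module.finrank ℂ (Derivation ℂ A A) = k + 4 := by
  have hexp : ∀ z : A, z = ∑ i ∈ Finset.range (k + 3), φ i z • y ^ i + ψ z • x := by
    intro z
    obtain ⟨g, a, hz⟩ := hspan z
    have h1 : ∀ i ∈ Finset.range (k + 3), φ i z = g i := by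
      intro i hi
      have hi2 : i ≤ k + 2 := by simp at hi; omega
      rw [hz]
      simp [hφy i _ hi2, hφx i hi2]
      intro h; omega
    have h2 : ψ z = a := by
      rw [hz]; simp [hψy, hψx]
    rw [h2, Finset.sum_congr rfl (fun i hi => by rw [h1 i hi])]
    exact hz
  have hzero : ∀ z : A, (∀ i ≤ k + 2, φ i z = 0) → ψ z = 0 → z = 0 := by
    intro z h1 h2
    rw [hexp z, h2, Finset.sum_eq_zero]
    · simp
    · intro i hi
      rw [h1 i (by simp at hi; omega)]; simp
  have hxyp : ∀ j, x * y ^ (j + 1) = 0 := fun j => by rw [pow_succ', ← mul_assoc, hxy, zero_mul]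
  have hyj : ∀ j z, y ^ (j + 1) * z = ∑ i ∈ Finset.range (k + 3), φ i z • y ^ (i + (j + 1)) := by
    intro j z
    conv_lhs => rw [hexp z]
    rw [mul_add, Finset.mul_sum, mul_smul_comm, mul_comm _ x, hxyp]
    simp only [smul_zero, add_zero]
    exact Finset.sum_congr rfl fun i _ => by rw [mul_smul_comm, ← pow_add, add_comm]
  have hxm : ∀ z, x * z = φ 0 z • x - (c * ψ z) • y ^ (k + 2) := by
    intro z
    conv_lhs => rw [hexp z]
    rw [mul_add, Finset.mul_sum, mul_smul_comm, ← pow_two, hxx, Finset.sum_range_succ',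
      Finset.sum_eq_zero]
    · simp only [pow_zero, mul_smul_comm, mul_one]
      module
    · intro i _
      rw [mul_smul_comm, hxyp, smul_zero]
  -- coordinates of products
  have cy : ∀ j z i, i ≤ k + 2 → φ i (y ^ (j + 1) * z) = if j + 1 ≤ i then φ (i - (j + 1)) z else 0 := by
    intro j z i hi
    rw [hyj, map_sum]
    simp only [map_smul, hφy i _ hi, smul_eq_mul, mul_ite, mul_one, mul_zero]
    split_ifs with h
    · rw [Finset.sum_eq_single (i - (j + 1))]
      · rw [if_pos (by omega)]
      · intro b _ hb; rw [if_neg (by omega)]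
      · intro h; simp at h; omega
    · apply Finset.sum_eq_zero
      intro b _; rw [if_neg (by omega)]
  have cyψ : ∀ j z, ψ (y ^ (j + 1) * z) = 0 := by
    intro j z; rw [hyj, map_sum]; simp [hψy]
  have cx : ∀ z i, i ≤ k + 2 → φ i (x * z) = if i = k + 2 then - (c * ψ z) else 0 := by
    intro z i hi
    rw [hxm, map_sub, map_smul, map_smul, hφx i hi, hφy i _ hi]
    by_cases h : i = k + 2
    · simp [h]
    · rw [if_neg h, if_neg (by omega)]; simp
  have cxψ : ∀ z, ψ (x * z) = φ 0 z := by
    intro z; rw [hxm]; simp [hψy, hψx]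
  -- equations of a derivation
  have hD : ∀ D : Derivation ℂ A A, y * D x + x * D y = 0 ∧
      2 * x * D x + (c * (k + 2)) • (y ^ (k + 1) * D y) = 0 := by
    intro D
    constructor
    · have := D.leibniz x y
      rw [hxy, map_zero] at this
      rw [this]; simp [add_comm]
    · have h1 := D.leibniz_pow x 2
      rw [hxx, map_neg, D.map_smul, D.leibniz_pow] at h1
      simp only [Nat.add_one_sub_one, pow_one, smul_eq_mul, show k + 2 - 1 = k + 1 by omega] at h1
      have h2 : 2 * x * D x = (2 : ℕ) • (x * D x) := by simp [mul_assoc]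
      rw [h2]
      have h3 : (2:ℕ) • (x * D x) = -(c • (k + 2) • (y ^ (k + 1) * D y)) := by
        rw [h1]
      rw [h3, mul_smul, ← Nat.cast_smul_eq_nsmul ℂ (k + 2)]
      push_cast
      module
  let T : Derivation ℂ A A →ₗ[ℂ] (Fin (k + 2) → ℂ) × ℂ × ℂ :=
    { toFun := fun D => (fun i => φ (i + 1) (D y), ψ (D y), φ (k + 2) (D x))
      map_add' := by intro D E; ext <;> simp
      map_smul' := by intro r D; ext <;> simp }
  have hTi : Function.Injective T := by
    rw [injective_iff_map_eq_zero]
    intro D hT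
    simp only [T, LinearMap.coe_mk, AddHom.coe_mk, Prod.mk_eq_zero] at hT
    obtain ⟨h1, h2, h3⟩ := hT
    obtain ⟨e1, e2⟩ := hD D
    have hy0 : φ 0 (D y) = 0 := by
      have := congrArg ψ e1
      have h := cyψ 0 (D x)
      rw [zero_add, pow_one] at h
      rw [map_add, h, cxψ] at this
      simpa using this
    have hy : D y = 0 := by
      apply hzero _ _ h2
      intro i hi
      rcases i with _ | i
      · exact hy0
      · exact congrFun h1 ⟨i, by omega⟩
    rw [hy] at e1 e2
    apply hext D _ hy
    apply hzero
    · intro i hi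
      rcases Nat.lt_or_ge i (k + 2) with h | h
      · have h' := cy 0 (D x) (i + 1) (by omega)
        rw [zero_add, pow_one] at h'
        have := congrArg (φ (i + 1)) e1
        rw [map_add, h', mul_zero] at this
        simpa using this
      · rw [show i = k + 2 by omega]; exact h3
    · have := congrArg (φ (k + 2)) e2
      rw [mul_assoc, mul_zero, smul_zero, add_zero, two_mul, map_add, cx _ _ le_rfl] at this
      simp at this
      rcases this with h | h
      · exact absurd h hc
      · exact h
  have hTs : Function.Surjective T := by
    rintro ⟨β, b', α⟩
    let B : ℕ → ℂ := fun i => if h : i < k + 2 then β ⟨i, h⟩ else 0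
    let b : A := ∑ i ∈ Finset.range (k + 2), B i • y ^ (i + 1) + b' • x
    let a : A := (c * b') • y ^ (k + 1) + α • y ^ (k + 2) + (((k:ℂ) + 2) / 2 * B 0) • x
    have hbψ : ψ b = b' := by simp [b, hψy, hψx]
    have hbφ : ∀ i < k + 2, φ (i + 1) b = B i := by
      intro i hi
      simp only [b, map_add, map_sum, map_smul, hφx (i + 1) (by omega), hφy (i + 1) _ (show i + 1 ≤ k + 2 by omega)]
      simp
      omega
    have hb0 : φ 0 b = 0 := by
      simp only [b, map_add, map_sum, map_smul, hφx 0 (by omega), hφy 0 _ (show 0 ≤ k + 2 by omega)]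
      simp
    have haψ : ψ a = ((k:ℂ) + 2) / 2 * B 0 := by simp [a, hψy, hψx]
    have haφ : ∀ i ≤ k + 2, φ i a = if i = k + 2 then α else if i = k + 1 then c * b' else 0 := by
      intro i hi
      simp only [a, map_add, map_smul, hφx i hi, hφy i _ hi]
      split_ifs <;> first | omega | simp
    obtain ⟨D, hDx, hDy⟩ := hlift a b (by
      apply hzero
      · intro i hi
        have h' := cy 0 a i hi
        rw [zero_add, pow_one] at h'
        rw [map_add, h', cx _ _ hi, hbψ]
        split_ifs with h1 h2 h2
        · rw [haφ _ (by omega), if_neg (by omega), if_pos (by omega)]; ring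
        · rw [haφ _ (by omega), if_neg (by omega), if_neg (by omega)]; ring
        · omega
        · simp
      · have h := cyψ 0 a
        rw [zero_add, pow_one] at h
        rw [map_add, h, cxψ, hb0, add_zero]) (by
      have ha0 : φ 0 a = 0 := by rw [haφ 0 (by omega), if_neg (by omega), if_neg (by omega)]
      rw [mul_assoc, two_mul]
      apply hzero
      · intro i hi
        rw [map_add, map_add, map_smul, cy _ _ _ hi, cx _ _ hi, haψ]
        split_ifs with h1 h2 h2
        · subst h1
          rw [show k + 2 - (k + 1) = 0 + 1 by omega, hbφ 0 (by omega), smul_eq_mul]; ring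
        · omega
        · rw [show i - (k + 1) = 0 by omega, hb0]; simp
        · simp
      · rw [map_add, map_add, map_smul, cyψ, cxψ, ha0]; simp)
    refine ⟨D, ?_⟩
    simp only [T, LinearMap.coe_mk, AddHom.coe_mk, hDx, hDy, hbψ]
    refine Prod.ext ?_ (Prod.ext rfl ?_)
    · funext i
      simp only [hbφ i i.2, B]
      simp
    · simp [haφ]
  rw [(LinearEquiv.ofBijective T ⟨hTi, hTs⟩).finrank_eq]
  simp

/-- The coordinate functionals on polynomials. -/
noncomputable def DmPhi (k : ℕ) (c : ℂ) (i : ℕ) : MvPolynomial (Fin 2) ℂ →ₗ[ℂ] ℂ :=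
  lcoeff ℂ (Finsupp.single 1 i) - (if i = k + 2 then c else 0) • lcoeff ℂ (Finsupp.single 0 2)

theorem DmPhi_apply (k : ℕ) (c : ℂ) (i : ℕ) (p) : DmPhi k c i p = coeff (Finsupp.single 1 i) p -
    (if i = k + 2 then c else 0) * coeff (Finsupp.single 0 2) p := by
  simp only [DmPhi, LinearMap.sub_apply, LinearMap.smul_apply, lcoeff_apply, smul_eq_mul]

theorem Dm_coeff_mul (k : ℕ) (s : Fin 2 →₀ ℕ) (i : Fin 2) (p : MvPolynomial (Fin 2) ℂ) :
    coeff s (p * X i ^ k) = if k ≤ s i then coeff (s - Finsupp.single i k) p else 0 := by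
  rw [X_pow_eq_monomial, coeff_mul_monomial', mul_one]
  simp only [Finsupp.single_le_iff]

theorem Dm_coeff_mul_xy (s : Fin 2 →₀ ℕ) (h : s 0 = 0 ∨ s 1 = 0) (p : MvPolynomial (Fin 2) ℂ) :
    coeff s (p * (2 * X 0 * X 1)) = 0 := by
  have h1 : p * (2 * X 0 * X 1) = (p * 2 * X 0) * X 1 ^ 1 := by ring
  have h2 : p * (2 * X 0 * X 1) = (p * 2 * X 1) * X 0 ^ 1 := by ring
  rcases h with h | h
  · rw [h2, Dm_coeff_mul, if_neg (by omega)]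
  · rw [h1, Dm_coeff_mul, if_neg (by omega)]

theorem Dm_coeff_mul_q (k : ℕ) (c : ℂ) (s : Fin 2 →₀ ℕ) (p : MvPolynomial (Fin 2) ℂ) :
    coeff s (p * (X 0 ^ 2 + C c * X 1 ^ (k + 2))) =
      (if 2 ≤ s 0 then coeff (s - Finsupp.single 0 2) p else 0) +
      c * (if k + 2 ≤ s 1 then coeff (s - Finsupp.single 1 (k + 2)) p else 0) := by
  rw [show p * (X 0 ^ 2 + C c * X 1 ^ (k + 2)) = p * X 0 ^ 2 + C c * (p * X 1 ^ (k + 2)) by ring,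
    coeff_add, coeff_C_mul, Dm_coeff_mul, Dm_coeff_mul]

set_option maxHeartbeats 1000000 in
theorem Dm_main (k : ℕ) (c : ℂ) (hc : c ≠ 0) :
    Module.finrank ℂ (Derivation ℂ
      (MvPolynomial (Fin 2) ℂ ⧸ Ideal.span {(2 : MvPolynomial (Fin 2) ℂ) * X 0 * X 1,
        (X 0 : MvPolynomial (Fin 2) ℂ) ^ 2 + C c * X 1 ^ (k + 2)})
      (MvPolynomial (Fin 2) ℂ ⧸ Ideal.span {(2 : MvPolynomial (Fin 2) ℂ) * X 0 * X 1,
        (X 0 : MvPolynomial (Fin 2) ℂ) ^ 2 + C c * X 1 ^ (k + 2)})) = k + 4 := by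
  set I : Ideal (MvPolynomial (Fin 2) ℂ) := Ideal.span {(2 : MvPolynomial (Fin 2) ℂ) * X 0 * X 1,
        (X 0 : MvPolynomial (Fin 2) ℂ) ^ 2 + C c * X 1 ^ (k + 2)} with hI
  have hsurj : Function.Surjective (Ideal.Quotient.mkₐ ℂ I) := Ideal.Quotient.mkₐ_surjective ℂ I
  have hker : ∀ p, Ideal.Quotient.mkₐ ℂ I p = 0 ↔ p ∈ I := fun p => Ideal.Quotient.eq_zero_iff_mem
  set π := Ideal.Quotient.mkₐ ℂ I with hπ
  have hφI : ∀ i ≤ k + 2, ∀ p ∈ I, DmPhi k c i p = 0 := by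
    intro i hi p hp
    obtain ⟨a, b, rfl⟩ := Ideal.mem_span_pair.1 hp
    rw [DmPhi_apply, coeff_add, coeff_add, Dm_coeff_mul_xy _ (by simp), Dm_coeff_mul_xy _ (by simp),
      Dm_coeff_mul_q, Dm_coeff_mul_q]
    by_cases h : i = k + 2
    · subst h; simp
    · have : ¬ (k + 2 ≤ i) := by omega
      simp [h, this]
  have hψI : ∀ p ∈ I, lcoeff ℂ (Finsupp.single (0 : Fin 2) 1) p = 0 := by
    intro p hp
    obtain ⟨a, b, rfl⟩ := Ideal.mem_span_pair.1 hp
    rw [lcoeff_apply, coeff_add, Dm_coeff_mul_xy _ (by simp), Dm_coeff_mul_q]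
    simp
  have hdesc : ∀ F : MvPolynomial (Fin 2) ℂ →ₗ[ℂ] ℂ, (∀ p ∈ I, F p = 0) →
      ∃ G : (MvPolynomial (Fin 2) ℂ ⧸ I) →ₗ[ℂ] ℂ, ∀ p, G (π p) = F p := by
    intro F hF
    refine ⟨(Submodule.liftQ (I.restrictScalars ℂ) F (fun p hp => hF p hp)), fun p => rfl⟩
  have hφ' : ∀ i, ∃ G : (MvPolynomial (Fin 2) ℂ ⧸ I) →ₗ[ℂ] ℂ,
      i ≤ k + 2 → ∀ p, G (π p) = DmPhi k c i p := by
    intro i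
    by_cases hi : i ≤ k + 2
    · obtain ⟨G, hG⟩ := hdesc _ (hφI i hi)
      exact ⟨G, fun _ => hG⟩
    · exact ⟨0, fun h => absurd h hi⟩
  choose φ hφ using hφ'
  obtain ⟨ψ, hψ⟩ := hdesc _ hψI
  have hxy : π (X 0) * π (X 1) = 0 := by
    rw [← map_mul, hker]
    have h1 : (2 : MvPolynomial (Fin 2) ℂ) * X 0 * X 1 ∈ I := Ideal.subset_span (by simp)
    have h2 := I.mul_mem_left (C (1/2)) h1
    have h3 : (C (1/2) : MvPolynomial (Fin 2) ℂ) * (2 * X 0 * X 1) = X 0 * X 1 := by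
      have : (C (1/2) : MvPolynomial (Fin 2) ℂ) * 2 = 1 := by
        rw [show (2 : MvPolynomial (Fin 2) ℂ) = C 2 from (map_ofNat C 2).symm, ← C_mul]; norm_num
      linear_combination (X 0 * X 1) * this
    rwa [h3] at h2
  have hxx : π (X 0) ^ 2 = -(c • π (X 1) ^ (k + 2)) := by
    rw [eq_neg_iff_add_eq_zero, ← map_pow, ← map_pow, ← map_smul, ← map_add, hker, smul_eq_C_mul]
    exact Ideal.subset_span (by simp)
  have hyy : π (X 1) ^ (k + 3) = 0 := by
    have h : c • π (X 1) ^ (k + 3) = 0 := by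
      rw [pow_succ, ← smul_mul_assoc, ← neg_eq_iff_eq_neg.2 hxx, pow_two, neg_mul, mul_assoc, hxy]
      simp
    exact (smul_eq_zero.1 h).resolve_left hc
  refine Dm_core k _ (π (X 0)) (π (X 1)) c hc hxy hxx φ ψ ?_ ?_ ?_ ?_ ?_ ?_ ?_
  · intro i j hi
    rw [← map_pow, hφ i hi, DmPhi_apply, coeff_X_pow, coeff_X_pow]
    have h : (j = i ∨ j = 0 ∧ i = 0) ↔ j = i := by omega
    simp [Finsupp.single_eq_single_iff, h]
  · intro i hi
    rw [hφ i hi, DmPhi_apply, coeff_X, coeff_X]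
    simp [Finsupp.single_eq_single_iff]
  · intro j
    rw [← map_pow, hψ, lcoeff_apply, coeff_X_pow]
    simp [Finsupp.single_eq_single_iff]
  · rw [hψ, lcoeff_apply, coeff_X]
    simp
  · intro z
    obtain ⟨p, rfl⟩ := hsurj z
    induction p using MvPolynomial.induction_on with
    | C r =>
      refine ⟨fun i => if i = 0 then r else 0, 0, ?_⟩
      have : π (C r) = r • (1 : MvPolynomial (Fin 2) ℂ ⧸ I) := by
        rw [← map_one π, ← map_smul π, smul_eq_C_mul, mul_one]
      simp [this]
    | add p q hp hq =>
      obtain ⟨g, a, hg⟩ := hp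
      obtain ⟨g', a', hg'⟩ := hq
      refine ⟨g + g', a + a', ?_⟩
      rw [map_add, hg, hg']
      simp only [Pi.add_apply, add_smul, Finset.sum_add_distrib]
      abel
    | mul_X p i hp =>
      obtain ⟨g, a, hg⟩ := hp
      rw [map_mul, hg, add_mul, Finset.sum_mul]
      have hi : i = 0 ∨ i = 1 := by fin_cases i <;> simp
      rcases hi with rfl | rfl
      · refine ⟨fun i => if i = k + 2 then - (c * a) else 0, g 0, ?_⟩
        rw [Finset.sum_range_succ', Finset.sum_eq_zero]
        · rw [smul_mul_assoc, smul_mul_assoc, ← pow_two, hxx]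
          rw [Finset.sum_eq_single (k + 2)]
          · simp only [if_true, pow_zero, one_mul, zero_add]
            module
          · intro j _ hj; simp [hj]
          · intro h; simp at h
        · intro j _
          rw [smul_mul_assoc, pow_succ, mul_assoc, mul_comm (π (X 1)), hxy]; simp
      · refine ⟨fun i => if i = 0 then 0 else g (i - 1), 0, ?_⟩
        rw [Finset.sum_range_succ, Finset.sum_range_succ' _ (k + 2), smul_mul_assoc, smul_mul_assoc,
          ← pow_succ, hyy, hxy]
        simp [pow_succ]
  · intro a b h1 h2
    obtain ⟨a, rfl⟩ := hsurj a
    obtain ⟨b, rfl⟩ := hsurj b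
    let d : Derivation ℂ (MvPolynomial (Fin 2) ℂ) (MvPolynomial (Fin 2) ℂ) := mkDerivation ℂ ![a, b]
    have d0 : d (X 0) = a := by simp [d, mkDerivation_X]
    have d1 : d (X 1) = b := by simp [d, mkDerivation_X]
    have hd : ∀ p, π p = 0 → π (d p) = 0 := by
      intro p hp
      rw [hker] at hp
      obtain ⟨u, v, rfl⟩ := Ideal.mem_span_pair.1 hp
      have e1 : π (2 * X 0 * X 1) = 0 := (hker _).2 (Ideal.subset_span (by simp))
      have e2 : π (X 0 ^ 2 + C c * X 1 ^ (k + 2)) = 0 := (hker _).2 (Ideal.subset_span (by simp))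
      have f1 : π (d (2 * X 0 * X 1)) = 0 := by
        rw [show (2 : MvPolynomial (Fin 2) ℂ) * X 0 * X 1 = (2:ℕ) • (X 0 * X 1) by simp [mul_assoc],
          map_nsmul, d.leibniz, d0, d1, map_nsmul, smul_eq_mul, smul_eq_mul, map_add, map_mul,
          map_mul, add_comm, h1, smul_zero]
      have f2 : π (d (X 0 ^ 2 + C c * X 1 ^ (k + 2))) = 0 := by
        rw [← smul_eq_C_mul, map_add, d.map_smul, d.leibniz_pow, d.leibniz_pow, d0, d1, ← h2,
          ← Nat.cast_smul_eq_nsmul ℂ (k + 2)]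
        simp [mul_smul, mul_assoc]
        rw [map_ofNat]
      have key : ∀ u g, π g = 0 → π (d g) = 0 → π (d (u * g)) = 0 := by
        intro u g hg hdg
        rw [d.leibniz, smul_eq_mul, smul_eq_mul, map_add, map_mul, map_mul, hg, hdg]
        simp
      rw [map_add, map_add, key u _ e1 f1, key v _ e2 f2, add_zero]
    refine ⟨Derivation.liftOfSurjective hsurj hd, ?_, ?_⟩
    · rw [Derivation.liftOfSurjective_apply, d0]
    · rw [Derivation.liftOfSurjective_apply, d1]
  · intro D hx hy
    ext z
    obtain ⟨p, rfl⟩ := hsurj z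
    rw [Derivation.zero_apply]
    induction p using MvPolynomial.induction_on with
    | C r =>
      have : π (C r) = algebraMap ℂ _ r := rfl
      rw [this, D.map_algebraMap]
    | add p q hp hq => rw [map_add, map_add, hp, hq, add_zero]
    | mul_X p i hp =>
      rw [map_mul, D.leibniz, hp]
      have hi : i = 0 ∨ i = 1 := by fin_cases i <;> simp
      rcases hi with rfl | rfl
      · rw [hx]; simp
      · rw [hy]; simp

/-- The space of `ℂ`-linear derivations of the moduli algebra of the simple singularity
`D_m` has dimension `m`. -/
theorem finrank_derivations_Dm (m : ℕ) (hm : 4 ≤ m) :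
    Module.finrank ℂ (Derivation ℂ (moduliD m) (moduliD m)) = m := by
  obtain ⟨k, rfl⟩ := Nat.exists_eq_add_of_le' hm
  have hc : ((k + 4 : ℕ) : ℂ) - 1 ≠ 0 := by
    rw [sub_ne_zero]
    exact_mod_cast (show k + 4 ≠ 1 by omega)
  exact Dm_main k _ hc
end

section
/- Let A = ℂ[X, Y]/(3X² + Y³, 3XY²) be the quotient of the polynomial ring in two variables by the ideal generated by the two partial derivatives of f(x, y) = x³ + xy³. Then the ℂ-vector space Der_ℂ(A, A) of ℂ-linear derivations of A has dimension 8. -/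
open MvPolynomial

/-- The moduli algebra of the simple singularity `E₇`, `f(x,y) = x³ + xy³`:
the quotient of `ℂ[X,Y]` by the ideal generated by `∂f/∂x = 3x² + y³` and
`∂f/∂y = 3xy²`. -/
noncomputable abbrev moduliE7 : Type :=
  MvPolynomial (Fin 2) ℂ ⧸
    Ideal.span {(3 : MvPolynomial (Fin 2) ℂ) * MvPolynomial.X 0 ^ 2 + MvPolynomial.X 1 ^ 3,
      (3 : MvPolynomial (Fin 2) ℂ) * MvPolynomial.X 0 * MvPolynomial.X 1 ^ 2}

namespace E7

abbrev P : Type := MvPolynomial (Fin 2) ℂ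

noncomputable abbrev I : Ideal P :=
  Ideal.span {(3 : MvPolynomial (Fin 2) ℂ) * MvPolynomial.X 0 ^ 2 + MvPolynomial.X 1 ^ 3,
      (3 : MvPolynomial (Fin 2) ℂ) * MvPolynomial.X 0 * MvPolynomial.X 1 ^ 2}

/-- Exponent `x^i y^j`. -/
noncomputable def e (i j : ℕ) : Fin 2 →₀ ℕ := Finsupp.single 0 i + Finsupp.single 1 j

lemma e_le (i j k l : ℕ) : e i j ≤ e k l ↔ i ≤ k ∧ j ≤ l := by
  rw [Finsupp.le_def, Fin.forall_fin_two]; simp [e]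

lemma e_sub (i j k l : ℕ) : e i j - e k l = e (i - k) (j - l) := by
  ext t; fin_cases t <;> simp [e]

lemma e_inj (i j k l : ℕ) : e i j = e k l ↔ i = k ∧ j = l := by
  rw [Finsupp.ext_iff, Fin.forall_fin_two]; simp [e]

lemma mono (i j : ℕ) (c : ℂ) : (monomial (e i j) c : P) = C c * X 0 ^ i * X 1 ^ j := by
  rw [monomial_eq, Finsupp.prod_fintype _ _ (by simp)]
  simp [e, mul_assoc]

/-- Coordinates on polynomials. -/
noncomputable def coordP : P →ₗ[ℂ] (Fin 7 → ℂ) :=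
  LinearMap.pi ![lcoeff ℂ (e 0 0), lcoeff ℂ (e 1 0), lcoeff ℂ (e 0 1), lcoeff ℂ (e 1 1),
    lcoeff ℂ (e 0 2), lcoeff ℂ (e 0 3) - (1/3 : ℂ) • lcoeff ℂ (e 2 0),
    lcoeff ℂ (e 0 4) - (1/3 : ℂ) • lcoeff ℂ (e 2 1)]

lemma g1 : (3 * X 0 ^ 2 + X 1 ^ 3 : P) = monomial (e 2 0) 3 + monomial (e 0 3) 1 := by
  rw [mono, mono]; simp [show (C 3 : P) = 3 from map_ofNat C 3]

lemma g2 : (3 * X 0 * X 1 ^ 2 : P) = monomial (e 1 2) 3 := by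
  rw [mono]; simp [show (C 3 : P) = 3 from map_ofNat C 3]

lemma coordP_I (p : P) (hp : p ∈ I) : coordP p = 0 := by
  rw [I, Ideal.mem_span_pair] at hp
  obtain ⟨u, v, rfl⟩ := hp
  rw [g1, g2]
  ext i
  fin_cases i <;>
  simp [coordP, mul_add, coeff_mul_monomial', e_le, e_sub]
  all_goals ring

noncomputable def coord : moduliE7 →ₗ[ℂ] (Fin 7 → ℂ) :=
  (Submodule.restrictScalars ℂ I).liftQ coordP (fun p hp => coordP_I p hp)

noncomputable def mk : P →ₐ[ℂ] moduliE7 := Ideal.Quotient.mkₐ ℂ I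

lemma mk_surj : Function.Surjective mk := Ideal.Quotient.mkₐ_surjective ℂ I

lemma coord_mk (p : P) : coord (mk p) = coordP p := rfl

lemma smd (c : ℂ) (z : moduliE7) : c • z = algebraMap ℂ moduliE7 c * z :=
  Algebra.smul_def c z

lemma mk3 : mk 3 = 3 := map_ofNat mk 3

noncomputable def x : moduliE7 := mk (X 0)
noncomputable def y : moduliE7 := mk (X 1)

noncomputable def elt (c : Fin 7 → ℂ) : moduliE7 :=
  c 0 • 1 + c 1 • x + c 2 • y + c 3 • (x * y) + c 4 • y ^ 2 + c 5 • y ^ 3 + c 6 • y ^ 4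

lemma rel1 : 3 * x ^ 2 + y ^ 3 = 0 := by
  have : mk (3 * X 0 ^ 2 + X 1 ^ 3) = 0 :=
    Ideal.Quotient.eq_zero_iff_mem.2 (Ideal.subset_span (by simp))
  simpa [x, y, mk3] using this

lemma three_inv : (algebraMap ℂ moduliE7 (1/3)) * 3 = 1 := by
  rw [← map_ofNat (algebraMap ℂ moduliE7) 3, ← map_mul]; simp

lemma rel1' : x ^ 2 = algebraMap ℂ moduliE7 (-1/3) * y ^ 3 := by
  have h : (algebraMap ℂ moduliE7 (-1/3)) = - algebraMap ℂ moduliE7 (1/3) := by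
    rw [← map_neg]; congr 1; norm_num
  rw [h]
  linear_combination (-x^2) * three_inv + algebraMap ℂ moduliE7 (1/3) * rel1

lemma rel2 : x * y ^ 2 = 0 := by
  have : mk (3 * X 0 * X 1 ^ 2) = 0 :=
    Ideal.Quotient.eq_zero_iff_mem.2 (Ideal.subset_span (by simp))
  have h : 3 * x * y ^ 2 = 0 := by simpa [x, y, mk3] using this
  linear_combination (-x*y^2) * three_inv + algebraMap ℂ moduliE7 (1/3) * h

lemma rel3 : y ^ 5 = 0 := by
  linear_combination y^2 * rel1 - 3 * x * rel2

lemma coord_elt (c : Fin 7 → ℂ) : coord (elt c) = c := by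
  have : elt c = mk (monomial (e 0 0) (c 0) + monomial (e 1 0) (c 1) + monomial (e 0 1) (c 2)
     + monomial (e 1 1) (c 3) + monomial (e 0 2) (c 4) + monomial (e 0 3) (c 5)
     + monomial (e 0 4) (c 6)) := by
    simp only [mono, ← smul_eq_C_mul, map_add, map_smul, map_mul, map_pow, elt, x, y]
    simp [smd, mul_assoc]
  rw [this, coord_mk]
  ext i
  fin_cases i <;> simp [coordP, coeff_monomial, e_inj]

lemma mul_x (c : Fin 7 → ℂ) :
    elt c * x = elt ![0, c 0, 0, c 2, 0, -1/3 * c 1, -1/3 * c 3] := by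
  simp only [elt, smd]
  simp
  linear_combination (algebraMap ℂ moduliE7 (c 1) + algebraMap ℂ moduliE7 (c 3) * y) * rel1'
    + (algebraMap ℂ moduliE7 (c 4) + algebraMap ℂ moduliE7 (c 5) * y +
      algebraMap ℂ moduliE7 (c 6) * y ^ 2) * rel2

lemma mul_y (c : Fin 7 → ℂ) :
    elt c * y = elt ![0, 0, c 0, c 1, c 2, c 4, c 5] := by
  simp only [elt, smd]
  simp
  linear_combination algebraMap ℂ moduliE7 (c 3) * rel2 + algebraMap ℂ moduliE7 (c 6) * rel3

lemma elt_add (c d : Fin 7 → ℂ) : elt c + elt d = elt (c + d) := by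
  simp only [elt, Pi.add_apply]; module

lemma exists_elt (z : moduliE7) : ∃ c, z = elt c := by
  obtain ⟨p, rfl⟩ := mk_surj z
  induction p using MvPolynomial.induction_on with
  | C a => exact ⟨![a, 0, 0, 0, 0, 0, 0], by
      simp [elt, smd]⟩
  | add p q hp hq =>
    obtain ⟨c, hc⟩ := hp
    obtain ⟨d, hd⟩ := hq
    exact ⟨c + d, by rw [map_add, hc, hd, elt_add]⟩
  | mul_X p i hp =>
    obtain ⟨c, hc⟩ := hp
    rw [map_mul, hc]
    fin_cases i
    · exact ⟨_, mul_x c⟩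
    · exact ⟨_, mul_y c⟩

lemma elt_coord (z : moduliE7) : elt (coord z) = z := by
  obtain ⟨c, rfl⟩ := exists_elt z
  rw [coord_elt]

/-- Existence of derivations with prescribed values. -/
lemma exists_der (a b : moduliE7) (h1 : 6 * x * a + 3 * y ^ 2 * b = 0)
    (h2 : 3 * y ^ 2 * a + 6 * x * y * b = 0) :
    ∃ D : Derivation ℂ moduliE7 moduliE7, D x = a ∧ D y = b := by
  let D0 : Derivation ℂ P moduliE7 := mkDerivation ℂ ![a, b]
  have sm : ∀ (p : P) (z : moduliE7), p • z = mk p * z := fun p z => Algebra.smul_def p z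
  have hX0 : D0 (X 0) = a := by simp [D0, mkDerivation_X]
  have hX1 : D0 (X 1) = b := by simp [D0, mkDerivation_X]
  have h3 : D0 3 = 0 := by
    have := D0.map_natCast 3
    simpa using this
  have k1 : D0 (3 * X 0 ^ 2 + X 1 ^ 3) = 0 := by
    simp only [map_add, Derivation.leibniz, Derivation.leibniz_pow, hX0, hX1, h3, sm]
    simp
    change 3 * (2 * (x * a)) + 3 * (y ^ 2 * b) = 0
    linear_combination h1
  have k2 : D0 (3 * X 0 * X 1 ^ 2) = 0 := by
    simp only [Derivation.leibniz, Derivation.leibniz_pow, hX0, hX1, h3, sm]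
    simp
    change 3 * x * (2 * (y * b)) + y ^ 2 * (3 * a) = 0
    linear_combination h2
  have m0 : ∀ p ∈ I, mk p = 0 := fun p hp => Ideal.Quotient.eq_zero_iff_mem.2 hp
  have hI : ∀ p ∈ I, D0 p = 0 := by
    intro p hp
    rw [I, Ideal.mem_span_pair] at hp
    obtain ⟨u, v, rfl⟩ := hp
    rw [map_add, D0.leibniz, D0.leibniz, k1, k2, sm, sm, sm, sm,
      m0 (3 * X 0 ^ 2 + X 1 ^ 3) (Ideal.subset_span (by simp)),
      m0 (3 * X 0 * X 1 ^ 2) (Ideal.subset_span (by simp))]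
    simp
  let L : moduliE7 →ₗ[ℂ] moduliE7 :=
    (Submodule.restrictScalars ℂ I).liftQ D0.toLinearMap (fun p hp => hI p hp)
  have hL : ∀ p, L (mk p) = D0 p := fun p => rfl
  refine ⟨Derivation.mk' L ?_, ?_, ?_⟩
  · intro u v
    obtain ⟨p, rfl⟩ := mk_surj u
    obtain ⟨q, rfl⟩ := mk_surj v
    rw [← map_mul, hL, hL, hL, D0.leibniz, sm, sm, smul_eq_mul, smul_eq_mul]
  · exact hX0
  · exact hX1

lemma der_rel (D : Derivation ℂ moduliE7 moduliE7) :
    6 * x * D x + 3 * y ^ 2 * D y = 0 ∧ y ^ 2 * D x + 2 * x * y * D y = 0 := by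
  have h3 : D 3 = 0 := by simpa using D.map_natCast 3
  constructor
  · have := congrArg D rel1
    simp [Derivation.leibniz, Derivation.leibniz_pow, h3] at this
    linear_combination this
  · have := congrArg D rel2
    simp [Derivation.leibniz, Derivation.leibniz_pow] at this
    linear_combination this

lemma der_ext (D D' : Derivation ℂ moduliE7 moduliE7) (hx : D x = D' x) (hy : D y = D' y) :
    D = D' := by
  ext z
  obtain ⟨c, rfl⟩ := exists_elt z
  simp [elt, hx, hy, Derivation.leibniz, Derivation.leibniz_pow]

lemma rel_iff (a b : Fin 7 → ℂ) :
    (6 * x * elt a + 3 * y ^ 2 * elt b = 0 ∧ y ^ 2 * elt a + 2 * x * y * elt b = 0) ↔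
    (a 0 = 0 ∧ a 2 = 0 ∧ b 0 = 0 ∧ b 2 = 2/3 * a 1 ∧ b 4 = 2/3 * a 3 ∧ b 1 = 3/2 * a 4) := by
  have sc : ∀ (r : ℂ) (c : Fin 7 → ℂ), r • elt c = elt (r • c) := by
    intro r c; simp only [elt, Pi.smul_apply, smul_eq_mul]; module
  have n6 : ∀ z : moduliE7, 6 * z = (6 : ℂ) • z := fun z => by
    rw [smd, map_ofNat]
  have n3 : ∀ z : moduliE7, 3 * z = (3 : ℂ) • z := fun z => by
    rw [smd, map_ofNat]
  have n2 : ∀ z : moduliE7, 2 * z = (2 : ℂ) • z := fun z => by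
    rw [smd, map_ofNat]
  have z0 : ∀ c, elt c = 0 ↔ c = 0 := fun c => by
    constructor
    · intro h; rw [← coord_elt c, h, map_zero]
    · rintro rfl; simp [elt]
  have e1 : 6 * x * elt a + 3 * y ^ 2 * elt b = 6 * (elt a * x) + 3 * (elt b * y * y) := by ring
  have e2 : y ^ 2 * elt a + 2 * x * y * elt b = elt a * y * y + 2 * (elt b * x * y) := by ring
  rw [e1, e2]
  simp only [mul_x, mul_y, n6, n3, n2, sc, elt_add, z0]
  simp [_root_.funext_iff, Fin.forall_fin_succ]
  grind

noncomputable def E : Derivation ℂ moduliE7 moduliE7 →ₗ[ℂ] (Fin 8 → ℂ) where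
  toFun D := ![coord (D x) 1, coord (D x) 3, coord (D x) 4, coord (D x) 5, coord (D x) 6,
    coord (D y) 3, coord (D y) 5, coord (D y) 6]
  map_add' D D' := by ext i; fin_cases i <;> simp
  map_smul' r D := by ext i; fin_cases i <;> simp

lemma E_inj : Function.Injective E := by
  intro D D' h
  have r := der_rel D
  rw [← elt_coord (D x), ← elt_coord (D y), rel_iff] at r
  have r' := der_rel D'
  rw [← elt_coord (D' x), ← elt_coord (D' y), rel_iff] at r'
  simp [E] at h
  apply der_ext
  · rw [← elt_coord (D x), ← elt_coord (D' x)]; simp [elt, h, r, r']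
  · rw [← elt_coord (D y), ← elt_coord (D' y)]; simp [elt, h, r, r']

lemma E_surj : Function.Surjective E := by
  intro t
  obtain ⟨h1, h2⟩ := (rel_iff ![0, t 0, 0, t 1, t 2, t 3, t 4]
    ![0, 3/2 * t 2, 2/3 * t 0, t 5, 2/3 * t 1, t 6, t 7]).2 (by simp)
  obtain ⟨D, hx, hy⟩ := exists_der _ _ h1 (by linear_combination 3 * h2)
  refine ⟨D, ?_⟩
  ext i
  fin_cases i <;> simp [E, hx, hy, coord_elt]

end E7

/-- The space of `ℂ`-linear derivations of the moduli algebra of the simple singularity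
`E₇` has dimension `8`. -/
theorem finrank_derivations_E7 :
    Module.finrank ℂ (Derivation ℂ moduliE7 moduliE7) = 8 := by
  rw [(LinearEquiv.ofBijective E7.E ⟨E7.E_inj, E7.E_surj⟩).finrank_eq]
  simp
end
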